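/- Let Λ ⊂ ℕⁿ be a finite set, v_j ∈ Λ, and n^(1), ..., n^(n) ∈ ℝⁿ linearly independent nonnegative vectors with n^(i)·(v - v_j) ≥ 0 for all v ∈ Λ and all i. Define β = min over v ∈ Λ \ {v_j} of (1/d)(v - v_j)·(n^(1)+...+n^(n)) for a fixed d > 0; then β > 0, and for every N ∈ ℕ and every q of the form q = Σᵢ ((N + kᵢ)/d) n^(i) with kᵢ ≥ 0 (and at least one kᵢ = 0 allowed, here interpreted as k replaced by N in one slot), one has q·(v - v_j) ≥ β N for all v ∈ Λ \ {v_j}. -/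

import Mathlib

open Finset

/-!
A vector `w ≠ 0` cannot be orthogonal to a family that spans the whole space. Hence, if all its
pairings with the family are nonnegative, one of them is positive, and so is their sum. For
`w = v - v_j` this gives `0 < β`. Lowering every coefficient `(N + kᵢ) / d` of `q` to `N / d` can
only decrease `q · w`, and leaves `N / d` times that sum, which is at least `β * N`.
-/

section Span

variable {R ι m : Type*} [CommSemiring R] [Fintype m] {a : ι → m → R} {w : m → R}

theorem eq_zero_of_span_range_eq_top_of_dotProduct_eq_zero
    (ha : Submodule.span R (Set.range a) = ⊤) (hw : ∀ i, a i ⬝ᵥ w = 0) : w = 0 := by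
  have hzero : (dotProductBilin R R).flip w = (0 : (m → R) →ₗ[R] R) :=
    LinearMap.ext_on_range ha hw
  exact dotProduct_eq_zero w fun u =>
    (dotProduct_comm w u).trans (LinearMap.congr_fun hzero u)

variable [PartialOrder R] [IsOrderedAddMonoid R] [Fintype ι]

theorem sum_dotProduct_pos_of_span_range_eq_top
    (ha : Submodule.span R (Set.range a) = ⊤) (hw : ∀ i, 0 ≤ a i ⬝ᵥ w) (hw₀ : w ≠ 0) :
    0 < (∑ i, a i) ⬝ᵥ w := by
  rw [sum_dotProduct]
  refine (sum_nonneg fun i _ => hw i).lt_of_ne' fun hsum => hw₀ ?_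
  have hzero := (sum_eq_zero_iff_of_nonneg fun i _ => hw i).mp hsum
  exact eq_zero_of_span_range_eq_top_of_dotProduct_eq_zero ha fun i => hzero i (mem_univ i)

end Span

theorem mul_sum_dotProduct_le_sum_smul_dotProduct {R ι m : Type*} [Semiring R] [PartialOrder R]
    [IsOrderedRing R] [Fintype m] {s : Finset ι} {a : ι → m → R} {w : m → R} {c : ι → R} {r : R}
    (hw : ∀ i ∈ s, 0 ≤ a i ⬝ᵥ w) (hc : ∀ i ∈ s, r ≤ c i) :
    r * ((∑ i ∈ s, a i) ⬝ᵥ w) ≤ (∑ i ∈ s, c i • a i) ⬝ᵥ w := by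
  simp only [sum_dotProduct, smul_dotProduct, smul_eq_mul, mul_sum]
  exact sum_le_sum fun i hi => mul_le_mul_of_nonneg_right (hc i hi) (hw i hi)

theorem stmt3_general {K ι m : Type*} [Field K] [LinearOrder K] [IsStrictOrderedRing K]
    [Fintype ι] [Fintype m] {S : Set (m → K)} {v₀ : m → K} {a : ι → m → K}
    (ha : Submodule.span K (Set.range a) = ⊤) (hS : ∀ v ∈ S, ∀ i, 0 ≤ a i ⬝ᵥ (v - v₀))
    {d : K} (hd : 0 < d) {β : K}
    (hβ : IsLeast {x | ∃ v ∈ S \ {v₀}, x = (1 / d) * ((v - v₀) ⬝ᵥ ∑ i, a i)} β) :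
    0 < β ∧ ∀ N : K, 0 ≤ N → ∀ k : ι → K, (∀ i, 0 ≤ k i) → ∀ v ∈ S \ {v₀},
      β * N ≤ (∑ i, ((N + k i) / d) • a i) ⬝ᵥ (v - v₀) := by
  constructor
  · obtain ⟨v, ⟨hvS, hv⟩, rfl⟩ := hβ.1
    rw [dotProduct_comm]
    exact mul_pos (one_div_pos.mpr hd)
      (sum_dotProduct_pos_of_span_range_eq_top ha (hS v hvS) (sub_ne_zero.mpr hv))
  · intro N hN k hk v hv
    have hcoeff (i : ι) : N / d ≤ (N + k i) / d := by
      gcongr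
      exact le_add_of_nonneg_right (hk i)
    calc
      β * N ≤ (1 / d) * ((v - v₀) ⬝ᵥ ∑ i, a i) * N :=
        mul_le_mul_of_nonneg_right (hβ.2 ⟨v, hv, rfl⟩) hN
      _ = N / d * ((∑ i, a i) ⬝ᵥ (v - v₀)) := by rw [dotProduct_comm]; ring
      _ ≤ (∑ i, ((N + k i) / d) • a i) ⬝ᵥ (v - v₀) :=
        mul_sum_dotProduct_le_sum_smul_dotProduct (fun i _ => hS v hv.1 i) fun i _ => hcoeff i

/-- Lemma 2.4: with `β = min_{v ∈ Λ \ {v_j}} (1/d)(v - v_j)·(n⁽¹⁾+⋯+n⁽ⁿ⁾)` one has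
`β > 0` and `q·(v - v_j) ≥ β N` for every `q = Σᵢ ((N+kᵢ)/d) n⁽ⁱ⁾` and `v ∈ Λ \ {v_j}`. -/
theorem stmt3 (n : ℕ) (Λ : Finset (Fin n → ℝ))
    (hΛnat : ∀ v ∈ Λ, ∀ i, ∃ m : ℕ, v i = m)
    (vj : Fin n → ℝ) (hvj : vj ∈ Λ)
    (nvec : Fin n → (Fin n → ℝ))
    (hnonneg : ∀ i l, 0 ≤ nvec i l)
    (hli : LinearIndependent ℝ nvec)
    (hconv : ∀ v ∈ Λ, ∀ i, 0 ≤ ∑ l, nvec i l * (v l - vj l))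
    (d : ℝ) (hd : 0 < d)
    (hne : (Λ.erase vj).Nonempty)
    (β : ℝ)
    (hβ : IsLeast
      {x : ℝ | ∃ v ∈ Λ.erase vj, x = (1 / d) * ∑ l, (v l - vj l) * (∑ i, nvec i l)} β) :
    0 < β ∧
      ∀ (N : ℕ) (k : Fin n → ℕ) (q : Fin n → ℝ),
        q = ∑ i, (((N + k i : ℕ) : ℝ) / d) • nvec i →
        ∀ v ∈ Λ, v ≠ vj → β * N ≤ ∑ l, q l * (v l - vj l) := by
  have hspan : Submodule.span ℝ (Set.range nvec) = ⊤ :=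
    hli.span_eq_top_of_card_eq_finrank' (by simp)
  obtain ⟨hpos, hle⟩ := stmt3_general (S := Λ) hspan hconv hd (β := β) (by
    simpa only [dotProduct, Finset.sum_apply, Pi.sub_apply, ← coe_erase, mem_coe] using hβ)
  refine ⟨hpos, ?_⟩
  rintro N k q rfl v hv hvne
  simpa only [Nat.cast_add, dotProduct, Pi.sub_apply] using
    hle N N.cast_nonneg (fun i => k i) (fun i => (k i).cast_nonneg) v ⟨hv, hvne⟩
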